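/- There exist real constants c > 0, C > 0 and a natural number n₀ such that for all n ≥ n₀: 2^{c·n·log₂ n} ≤ f(n,3,4,{0,1,3}) ≤ 2^{C·n·log₂ n}; that is, the number of ({0,1,3},4)-free 3-graphs on [n] is n^{Θ(n)}. -/

import Mathlib

open Finset

/-- The family of all `r`-graphs on `[n]`: sets of `r`-element subsets of `Fin n`. -/
def rGraphs (n r : ℕ) : Finset (Finset (Finset (Fin n))) :=
  (Finset.univ.powersetCard r).powerset

/-- `G` is `(L,k)`-free: for every `k`-element vertex set `S`, the number of edges of `G`
contained in `S` does not belong to `L`. -/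
def IsLKFree (n k : ℕ) (L : Finset ℕ) (G : Finset (Finset (Fin n))) : Prop :=
  ∀ S : Finset (Fin n), S.card = k → (G.filter (fun e => e ⊆ S)).card ∉ L

instance (n k : ℕ) (L : Finset ℕ) : DecidablePred (IsLKFree n k L) := fun G =>
  inferInstanceAs (Decidable (∀ S : Finset (Fin n), S.card = k →
    (G.filter (fun e => e ⊆ S)).card ∉ L))

/-- `f(n,r,k,L)`: the number of `(L,k)`-free `r`-graphs on `[n]`. -/
def numFree (n r k : ℕ) (L : Finset ℕ) : ℕ :=
  ((rGraphs n r).filter (IsLKFree n k L)).card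

theorem quad_count {n : ℕ} (G : Finset (Finset (Fin n))) (hG : ∀ e ∈ G, e.card = 3)
    {a b c d : Fin n} (hab : a ≠ b) (hac : a ≠ c) (had : a ≠ d) (hbc : b ≠ c) (hbd : b ≠ d)
    (hcd : c ≠ d) :
    (G.filter (fun e => e ⊆ {a, b, c, d})).card =
      (if {a, b, c} ∈ G then 1 else 0) + ((if {a, b, d} ∈ G then 1 else 0) +
      ((if {a, c, d} ∈ G then 1 else 0) + (if {b, c, d} ∈ G then 1 else 0))) := by
  classical
  have h4 : ({a, b, c, d} : Finset (Fin n)).card = 4 := by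
    simp [hab, hac, had, hbc, hbd, hcd]
  have key : G.filter (fun e => e ⊆ {a, b, c, d}) =
      ({{a, b, c}, {a, b, d}, {a, c, d}, {b, c, d}} : Finset (Finset (Fin n))).filter
        (fun e => e ∈ G) := by
    ext e
    simp only [mem_filter, mem_insert, mem_singleton]
    constructor
    · rintro ⟨he, hs⟩
      refine ⟨?_, he⟩
      have h3 := hG e he
      have hd1 : (({a, b, c, d} : Finset (Fin n)) \ e).card = 1 := by
        rw [card_sdiff_of_subset hs]; omega
      obtain ⟨t, ht⟩ := card_eq_one.1 hd1
      have he2 : e = ({a, b, c, d} : Finset (Fin n)) \ {t} := by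
        rw [← ht, Finset.sdiff_sdiff_eq_self hs]
      have htm : t ∈ ({a, b, c, d} : Finset (Fin n)) := by
        have : t ∈ ({a, b, c, d} : Finset (Fin n)) \ e := by rw [ht]; simp
        exact (mem_sdiff.1 this).1
      simp only [mem_insert, mem_singleton] at htm
      rcases htm with rfl | rfl | rfl | rfl
      · right; right; right; rw [he2]; ext x; simp; grind
      · right; right; left; rw [he2]; ext x; simp; grind
      · right; left; rw [he2]; ext x; simp; grind
      · left; rw [he2]; ext x; simp; grind
    · rintro ⟨he, hm⟩
      refine ⟨hm, ?_⟩
      rcases he with rfl | rfl | rfl | rfl <;> intro x <;> simp <;> grind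
  have n1 : ({a, b, c} : Finset (Fin n)) ≠ {a, b, d} := by
    intro h; have := Finset.ext_iff.1 h c; simp at this; grind
  have n2 : ({a, b, c} : Finset (Fin n)) ≠ {a, c, d} := by
    intro h; have := Finset.ext_iff.1 h b; simp at this; grind
  have n3 : ({a, b, c} : Finset (Fin n)) ≠ {b, c, d} := by
    intro h; have := Finset.ext_iff.1 h a; simp at this; grind
  have n4 : ({a, b, d} : Finset (Fin n)) ≠ {a, c, d} := by
    intro h; have := Finset.ext_iff.1 h b; simp at this; grind
  have n5 : ({a, b, d} : Finset (Fin n)) ≠ {b, c, d} := by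
    intro h; have := Finset.ext_iff.1 h a; simp at this; grind
  have n6 : ({a, c, d} : Finset (Fin n)) ≠ {b, c, d} := by
    intro h; have := Finset.ext_iff.1 h a; simp at this; grind
  rw [key, card_filter, sum_insert (by simp [n1, n2, n3]), sum_insert (by simp [n4, n5]),
    sum_insert (by simp [n6]), sum_singleton]

theorem quad_free {n : ℕ} {G : Finset (Finset (Fin n))} (hG : ∀ e ∈ G, e.card = 3)
    (hf : IsLKFree n 4 {0, 1, 3} G)
    {a b c d : Fin n} (hab : a ≠ b) (hac : a ≠ c) (had : a ≠ d) (hbc : b ≠ c) (hbd : b ≠ d)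
    (hcd : c ≠ d) :
    (if {a, b, c} ∈ G then 1 else 0) + ((if {a, b, d} ∈ G then 1 else 0) +
      ((if {a, c, d} ∈ G then 1 else 0) + (if {b, c, d} ∈ G then 1 else 0))) ∉
      ({0, 1, 3} : Finset ℕ) := by
  rw [← quad_count G hG hab hac had hbc hbd hcd]
  exact hf _ (by simp [hab, hac, had, hbc, hbd, hcd])

/-- Coding of graphs with no triangle and no induced matching of size two. -/
theorem code_exists {n : ℕ} (Γ : Fin n → Fin n → Prop) (hs : ∀ x y, Γ x y → Γ y x)
    (hi : ∀ x, ¬ Γ x x) (ht : ∀ x y z, Γ x y → Γ y z → Γ x z → False)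
    (hm : ∀ a b x y, Γ a b → Γ x y → Γ a x ∨ Γ a y ∨ Γ b x ∨ Γ b y) :
    ∃ p : (Fin n → Fin 3) × (Fin n → Fin 3 → Fin (n + 2)) × (Fin n → Fin 3 → Fin (n + 2)),
      ∀ u x, Γ u x ↔ p.2.2 x (p.1 u) ≤ p.2.1 u (p.1 x) := by
  classical
  obtain ⟨c, hc⟩ : ∃ c : Fin n → Fin 3, ∀ x y, c x = c y → ¬ Γ x y := by
    by_cases he : ∃ a b, Γ a b
    · obtain ⟨a, b, hab⟩ := he
      refine ⟨fun x => if Γ x a then 0 else if Γ x b then 1 else 2, ?_⟩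
      intro x y hxy h
      have e1 := hm a b x y hab h
      have e2 := hs a x
      have e3 := hs a y
      have e4 := hs b x
      have e5 := hs b y
      have e6 := ht x y a h
      have e7 := ht x y b h
      simp only at hxy
      clear hm hs ht
      split_ifs at hxy <;> first | (exfalso; revert hxy; decide) | tauto
    · exact ⟨fun _ => 0, fun x y _ h => he ⟨x, y, h⟩⟩
  let N : Fin n → Fin 3 → Finset (Fin n) := fun u j => univ.filter (fun x => c x = j ∧ Γ u x)
  have hN : ∀ u j x, x ∈ N u j ↔ c x = j ∧ Γ u x := by intro u j x; simp [N]
  have hlt : ∀ u j, (N u j).card < n + 2 := by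
    intro u j
    have := card_le_univ (N u j)
    simp at this
    omega
  have nest : ∀ u v j, c u = c v → (N u j).card ≤ (N v j).card → N u j ⊆ N v j := by
    intro u v j huv hcard x hx
    by_contra hxv
    have : ¬ N v j ⊆ N u j := by
      intro hsub
      have := eq_of_subset_of_card_le hsub hcard
      rw [this] at hxv
      exact hxv hx
    obtain ⟨y, hyv, hyu⟩ := not_subset.1 this
    rw [hN] at hx hxv hyv hyu
    have h1 : ¬ Γ v x := fun h => hxv ⟨hx.1, h⟩
    have h2 : ¬ Γ u y := fun h => hyu ⟨hyv.1, h⟩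
    rcases hm u x v y hx.2 hyv.2 with h | h | h | h
    · exact hc _ _ huv h
    · exact h2 h
    · exact h1 (hs _ _ h)
    · exact hc _ _ (hx.1.trans hyv.1.symm) h
  have hg : ∀ x i, ∃ t : Fin (n + 2), ∀ u, c u = i →
      (Γ u x ↔ t ≤ (⟨(N u (c x)).card, hlt u (c x)⟩ : Fin (n + 2))) := by
    intro x i
    by_cases he : ((univ : Finset (Fin n)).filter (fun u => c u = i ∧ Γ u x)).Nonempty
    · obtain ⟨w, hw, hmin⟩ := exists_min_image _ (fun u => (N u (c x)).card) he
      simp only [mem_filter, mem_univ, true_and] at hw hmin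
      refine ⟨⟨(N w (c x)).card, hlt w (c x)⟩, fun u hu => ?_⟩
      rw [Fin.mk_le_mk]
      constructor
      · intro h
        exact hmin u ⟨hu, h⟩
      · intro h
        have := nest w u (c x) (hw.1.trans hu.symm) h ((hN _ _ _).2 ⟨rfl, hw.2⟩)
        exact ((hN _ _ _).1 this).2
    · refine ⟨Fin.last _, fun u hu => ?_⟩
      constructor
      · intro h
        exact absurd ⟨u, by simp [hu, h]⟩ he
      · intro h
        have h1 := card_le_univ (N u (c x))
        simp at h1
        have h2 := Fin.le_def.1 h
        simp at h2
        omega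
  choose g hg using hg
  exact ⟨⟨c, fun u j => ⟨(N u j).card, hlt u j⟩, g⟩, fun u x => hg x (c u) u rfl⟩

/-- The link graph of the complement at `v`. -/
def lnk {n : ℕ} (v : Fin n) (G : Finset (Finset (Fin n))) (x y : Fin n) : Prop :=
  x ≠ y ∧ v ≠ x ∧ v ≠ y ∧ ({v, x, y} : Finset (Fin n)) ∉ G

theorem lnk_code {n : ℕ} (v : Fin n) {G : Finset (Finset (Fin n))} (hG : ∀ e ∈ G, e.card = 3)
    (hf : IsLKFree n 4 {0, 1, 3} G) :
    ∃ p : (Fin n → Fin 3) × (Fin n → Fin 3 → Fin (n + 2)) × (Fin n → Fin 3 → Fin (n + 2)),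
      ∀ u x, lnk v G u x ↔ p.2.2 x (p.1 u) ≤ p.2.1 u (p.1 x) := by
  have hs : ∀ x y, lnk v G x y → lnk v G y x := by
    rintro x y ⟨h1, h2, h3, h4⟩
    exact ⟨h1.symm, h3, h2, by rwa [pair_comm y x]⟩
  have par : ∀ x y z, v ≠ x → v ≠ y → v ≠ z → x ≠ y → x ≠ z → y ≠ z → _ :=
    fun x y z h1 h2 h3 h4 h5 h6 => quad_free hG hf h1 h2 h3 h4 h5 h6
  apply code_exists _ hs
  · rintro x ⟨h, _⟩
    exact h rfl
  · rintro x y z ⟨h1, h2, h3, h4⟩ ⟨h5, _, h7, h8⟩ ⟨h9, _, _, h10⟩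
    have := par x y z h2 h3 h7 h1 h9 h5
    simp only [h4, h8, h10, if_false] at this
    split_ifs at this <;> simp at this
  · rintro a b x y ha hx
    by_contra! hcon
    obtain ⟨n1, n2, n3, n4⟩ := hcon
    have hax : a ≠ x := by rintro rfl; exact n3 (hs _ _ ha)
    have hay : a ≠ y := by rintro rfl; exact n4 (hs _ _ ha)
    have hbx : b ≠ x := by rintro rfl; exact n1 ha
    have hby : b ≠ y := by rintro rfl; exact n2 ha
    obtain ⟨h1, h2, h3, h4⟩ := ha
    obtain ⟨k1, k2, k3, k4⟩ := hx
    have m1 : {v, a, x} ∈ G := by by_contra h; exact n1 ⟨hax, h2, k2, h⟩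
    have m2 : {v, a, y} ∈ G := by by_contra h; exact n2 ⟨hay, h2, k3, h⟩
    have m3 : {v, b, x} ∈ G := by by_contra h; exact n3 ⟨hbx, h3, k2, h⟩
    have m4 : {v, b, y} ∈ G := by by_contra h; exact n4 ⟨hby, h3, k3, h⟩
    have p1 := par a b x h2 h3 k2 h1 hax hbx
    have p2 := par a b y h2 h3 k3 h1 hay hby
    have p3 := par a x y h2 k2 k3 hax hay k1
    have p4 := par b x y h3 k2 k3 hbx hby k1
    have p5 := quad_free hG hf h1 hax hay hbx hby k1
    simp only [h4, k4, m1, m2, m3, m4, if_true, if_false] at p1 p2 p3 p4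
    by_cases q1 : {a, b, x} ∈ G
    · simp [q1] at p1
    by_cases q2 : {a, b, y} ∈ G
    · simp [q2] at p2
    by_cases q3 : {a, x, y} ∈ G
    · simp [q3] at p3
    by_cases q4 : {b, x, y} ∈ G
    · simp [q4] at p4
    simp [q1, q2, q3, q4] at p5

theorem lnk_inj {n : ℕ} (v : Fin n) {G G' : Finset (Finset (Fin n))}
    (hG : ∀ e ∈ G, e.card = 3) (hG' : ∀ e ∈ G', e.card = 3)
    (hf : IsLKFree n 4 {0, 1, 3} G) (hf' : IsLKFree n 4 {0, 1, 3} G')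
    (h : ∀ x y, lnk v G x y ↔ lnk v G' x y) : G = G' := by
  have hv : ∀ x y, v ≠ x → v ≠ y → x ≠ y → (({v, x, y} : Finset (Fin n)) ∈ G ↔ {v, x, y} ∈ G') := by
    intro x y h1 h2 h3
    have := h x y
    simp only [lnk, h1, h2, h3, ne_eq, not_false_eq_true, true_and] at this
    exact not_iff_not.1 this
  have all : ∀ x y z, x ≠ y → x ≠ z → y ≠ z →
      (({x, y, z} : Finset (Fin n)) ∈ G ↔ {x, y, z} ∈ G') := by
    intro x y z hxy hxz hyz
    by_cases h1 : v = x
    · subst h1; exact hv y z hxy hxz hyz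
    by_cases h2 : v = y
    · subst h2
      rw [insert_comm]
      exact hv x z h1 hyz hxz
    by_cases h3 : v = z
    · subst h3
      have e : ({x, y, v} : Finset (Fin n)) = {v, x, y} := by
        ext t; simp; tauto
      rw [e]
      exact hv x y h1 h2 hxy
    have a1 := quad_free hG hf h1 h2 h3 hxy hxz hyz
    have a2 := quad_free hG' hf' h1 h2 h3 hxy hxz hyz
    simp only [hv x y h1 h2 hxy, hv x z h1 h3 hxz, hv y z h2 h3 hyz] at a1
    clear hv h hf hf' hG hG'
    by_cases p : ({x, y, z} : Finset (Fin n)) ∈ G <;>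
      by_cases q : ({x, y, z} : Finset (Fin n)) ∈ G' <;>
      simp only [p, q, if_true, if_false] at a1 a2 ⊢ <;> exfalso <;> revert a1 a2 <;>
      split_ifs <;> decide
  ext e
  constructor
  · intro he
    obtain ⟨x, y, z, h1, h2, h3, rfl⟩ := card_eq_three.1 (hG e he)
    exact (all x y z h1 h2 h3).1 he
  · intro he
    obtain ⟨x, y, z, h1, h2, h3, rfl⟩ := card_eq_three.1 (hG' e he)
    exact (all x y z h1 h2 h3).2 he

theorem mem_fam {n : ℕ} {G : Finset (Finset (Fin n))} :
    G ∈ (rGraphs n 3).filter (IsLKFree n 4 {0, 1, 3}) ↔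
      (∀ e ∈ G, e.card = 3) ∧ IsLKFree n 4 {0, 1, 3} G := by
  simp only [mem_filter, rGraphs, mem_powerset, subset_iff, mem_powersetCard]
  simp

theorem upper_nat {n : ℕ} (hn : 0 < n) :
    numFree n 3 4 {0, 1, 3} ≤ 3 ^ n * (((n + 2) ^ 3) ^ n * ((n + 2) ^ 3) ^ n) := by
  classical
  have hc := fun (G : Finset (Finset (Fin n)))
    (h : G ∈ (rGraphs n 3).filter (IsLKFree n 4 {0, 1, 3})) =>
    lnk_code (⟨0, hn⟩ : Fin n) (mem_fam.1 h).1 (mem_fam.1 h).2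
  choose! F hF using hc
  have := card_le_card_of_injOn (s := (rGraphs n 3).filter (IsLKFree n 4 {0, 1, 3}))
    (t := univ) F (fun _ _ => mem_coe.2 (mem_univ _)) (by
      intro G hG G' hG' he
      have hG := mem_coe.1 hG
      have hG' := mem_coe.1 hG'
      refine lnk_inj ⟨0, hn⟩ (mem_fam.1 hG).1 (mem_fam.1 hG').1 (mem_fam.1 hG).2 (mem_fam.1 hG').2 ?_
      intro x y
      rw [hF G hG, hF G' hG', he])
  simpa [numFree] using this

theorem bool_lem : ∀ p q r s t u : Bool,
    ¬ (p && q && s) → ¬ (p && r && t) → ¬ (q && r && u) → ¬ (s && t && u) →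
    ¬ (p && u && !q && !r && !s && !t) → ¬ (q && t && !p && !r && !s && !u) →
    ¬ (r && s && !p && !q && !t && !u) →
    (if (p ^^ (q ^^ s)) = false then 1 else 0) + ((if (p ^^ (r ^^ t)) = false then 1 else 0) +
      ((if (q ^^ (r ^^ u)) = false then 1 else 0) + (if (s ^^ (t ^^ u)) = false then 1 else 0))) ∉
      ({0, 1, 3} : Finset ℕ) := by
  decide

/-- The chain graph, as a Boolean relation. -/
def chn {n : ℕ} (s : Fin n → Bool) (h : Fin n → ℕ) (x y : Fin n) : Bool :=
  (s x && !s y && decide (h y < h x)) || (s y && !s x && decide (h x < h y))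

def chG {n : ℕ} (s : Fin n → Bool) (h : Fin n → ℕ) : Finset (Finset (Fin n)) :=
  (univ.powersetCard 3).filter (fun e => ∃ x y z, x ≠ y ∧ x ≠ z ∧ y ≠ z ∧ e = {x, y, z} ∧
    (chn s h x y ^^ (chn s h x z ^^ chn s h y z)) = false)

theorem chn_symm {n : ℕ} (s : Fin n → Bool) (h : Fin n → ℕ) (x y : Fin n) :
    chn s h x y = chn s h y x := by
  simp only [chn]; exact Bool.or_comm _ _

theorem mem_chG {n : ℕ} (s : Fin n → Bool) (h : Fin n → ℕ) {a b c : Fin n}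
    (hab : a ≠ b) (hac : a ≠ c) (hbc : b ≠ c) :
    {a, b, c} ∈ chG s h ↔ (chn s h a b ^^ (chn s h a c ^^ chn s h b c)) = false := by
  constructor
  · intro hm
    obtain ⟨_, x, y, z, h1, h2, h3, he, hx⟩ := mem_filter.1 hm
    have ea := Finset.ext_iff.1 he a
    have eb := Finset.ext_iff.1 he b
    have ec := Finset.ext_iff.1 he c
    simp only [mem_insert, mem_singleton, true_or, or_true, true_iff] at ea eb ec
    have s1 := chn_symm s h x y
    have s2 := chn_symm s h x z
    have s3 := chn_symm s h y z
    rcases ea with rfl | rfl | rfl <;> rcases eb with rfl | rfl | rfl <;>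
      rcases ec with rfl | rfl | rfl <;> first | exact absurd rfl hab | exact absurd rfl hac | exact absurd rfl hbc | grind
  · intro hx
    refine mem_filter.2 ⟨?_, a, b, c, hab, hac, hbc, rfl, hx⟩
    simp [mem_powersetCard, hab, hac, hbc]

theorem chG_free {n : ℕ} (s : Fin n → Bool) (h : Fin n → ℕ) :
    chG s h ∈ (rGraphs n 3).filter (IsLKFree n 4 {0, 1, 3}) := by
  have h3 : ∀ e ∈ chG s h, e.card = 3 := by
    intro e he
    exact (mem_powersetCard.1 (mem_filter.1 he).1).2
  refine mem_fam.2 ⟨h3, ?_⟩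
  intro S hS
  obtain ⟨a, b, c, d, hab, hac, had, hbc, hbd, hcd, rfl⟩ := card_eq_four.1 hS
  rw [quad_count _ h3 hab hac had hbc hbd hcd]
  simp only [mem_chG s h hab hac hbc, mem_chG s h hab had hbd, mem_chG s h hac had hcd,
    mem_chG s h hbc hbd hcd]
  apply bool_lem <;> simp only [chn] <;> cases s a <;> cases s b <;> cases s c <;> cases s d <;>
    simp <;> omega

theorem lower_nat (k n : ℕ) (hk : 0 < k) (hn : 2 * k ≤ n) :
    k ^ (k - 1) ≤ numFree n 3 4 {0, 1, 3} := by
  classical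
  let s : Fin n → Bool := fun x => decide (x.val < k)
  -- vertex `0` is isolated, vertex `i + 1` gets the value `φ i + 1`
  let h : (Fin (k - 1) → Fin k) → Fin n → ℕ := fun φ x =>
    if hx : 0 < x.val ∧ x.val < k then (φ ⟨x.val - 1, by omega⟩).val + 1 else x.val - k
  have inj : Function.Injective (fun φ => chG s (h φ)) := by
    intro φ ψ he
    simp only at he
    have key : ∀ u x : Fin n, 0 < u.val → u.val < k → k ≤ x.val →
        (h φ x < h φ u ↔ h ψ x < h ψ u) := by
      intro u x h0 hu hx
      have n1 : (⟨0, by omega⟩ : Fin n) ≠ u := by intro h; rw [← h] at h0; simp at h0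
      have n2 : (⟨0, by omega⟩ : Fin n) ≠ x := by intro h; rw [← h] at hx; simp at hx; omega
      have n3 : u ≠ x := by rintro rfl; omega
      have a1 := mem_chG s (h φ) n1 n2 n3
      have a2 := mem_chG s (h ψ) n1 n2 n3
      rw [he, a2] at a1
      have z : ∀ φ, h φ ⟨0, by omega⟩ = 0 := by intro φ; simp [h]
      have su : s u = true := by simp [s, hu]
      have sx : s x = false := by simp [s, hx]
      have s0 : s ⟨0, by omega⟩ = true := by simp [s, hk]
      simp only [chn, su, sx, s0, z] at a1
      simp at a1
      omega
    funext i
    apply Fin.ext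
    have hi := i.2
    have val : ∀ φ : Fin (k - 1) → Fin k, h φ ⟨i.val + 1, by omega⟩ = (φ i).val + 1 := by
      intro φ
      have : i.val + 1 < k := by omega
      simp [h, this]
    have valx : ∀ (φ : Fin (k - 1) → Fin k) (j : ℕ) (hj : j < k), h φ ⟨k + j, by omega⟩ = j := by
      intro φ j hj
      simp [h]
    have k1 := key ⟨i.val + 1, by omega⟩ ⟨k + (φ i).val, by have := (φ i).2; omega⟩
      (by simp) (by simp; omega) (by simp)
    have k2 := key ⟨i.val + 1, by omega⟩ ⟨k + (ψ i).val, by have := (ψ i).2; omega⟩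
      (by simp) (by simp; omega) (by simp)
    rw [val, val, valx _ _ (φ i).2, valx _ _ (φ i).2] at k1
    rw [val, val, valx _ _ (ψ i).2, valx _ _ (ψ i).2] at k2
    omega
  have := card_le_card_of_injOn (s := univ)
    (t := (rGraphs n 3).filter (IsLKFree n 4 {0, 1, 3})) (fun φ => chG s (h φ))
    (fun φ _ => chG_free s (h φ)) (inj.injOn)
  simpa [numFree] using this

/-- Lemma: `f(n,3,4,{0,1,3}) = 2^(Θ(n log₂ n)) = n^(Θ(n))`. -/
theorem count_L013 :
    ∃ c C : ℝ, 0 < c ∧ 0 < C ∧ ∃ n₀ : ℕ, ∀ n : ℕ, n₀ ≤ n →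
      (2 : ℝ) ^ (c * (n : ℝ) * Real.logb 2 n) ≤ (numFree n 3 4 {0, 1, 3} : ℝ) ∧
      (numFree n 3 4 {0, 1, 3} : ℝ) ≤ (2 : ℝ) ^ (C * (n : ℝ) * Real.logb 2 n) := by
  refine ⟨1 / 8, 13, by norm_num, by norm_num, 16, fun n hn => ?_⟩
  have hn0 : (0 : ℝ) < n := by
    have : 0 < n := by omega
    exact_mod_cast this
  have conv : ∀ c : ℝ, (2 : ℝ) ^ (c * (n : ℝ) * Real.logb 2 n) = (n : ℝ) ^ (c * n) := by
    intro c
    rw [mul_comm, Real.rpow_mul (by norm_num), Real.rpow_logb (by norm_num) (by norm_num) hn0]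
  rw [conv, conv]
  constructor
  · have hl := lower_nat (n / 2) n (by omega) (by omega)
    have h1 : n ≤ (n / 2) ^ 2 := by
      have : n ≤ 2 * (n / 2) + 1 := by omega
      have : 8 ≤ n / 2 := by omega
      nlinarith
    have h2 : n ≤ 4 * (n / 2 - 1) := by omega
    have h1' : (n : ℝ) ≤ ((n / 2 : ℕ) : ℝ) ^ (2 : ℝ) := by
      rw [Real.rpow_two]; exact_mod_cast h1
    have h2' : (n : ℝ) ≤ 4 * ((n / 2 - 1 : ℕ) : ℝ) := by exact_mod_cast h2
    have hk1 : (1 : ℝ) ≤ ((n / 2 : ℕ) : ℝ) := by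
      have : 1 ≤ n / 2 := by omega
      exact_mod_cast this
    calc (n : ℝ) ^ (1 / 8 * (n : ℝ)) ≤ (((n / 2 : ℕ) : ℝ) ^ (2 : ℝ)) ^ (1 / 8 * (n : ℝ)) :=
          Real.rpow_le_rpow hn0.le h1' (by positivity)
      _ = ((n / 2 : ℕ) : ℝ) ^ (2 * (1 / 8 * (n : ℝ))) := by
          rw [← Real.rpow_mul (by positivity)]
      _ ≤ ((n / 2 : ℕ) : ℝ) ^ ((n / 2 - 1 : ℕ) : ℝ) :=
          Real.rpow_le_rpow_of_exponent_le hk1 (by linarith)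
      _ = (((n / 2) ^ (n / 2 - 1) : ℕ) : ℝ) := by rw [Real.rpow_natCast]; push_cast; rfl
      _ ≤ _ := by exact_mod_cast hl
  · have hu := upper_nat (n := n) (by omega)
    have h2 : n + 2 ≤ n ^ 2 := by nlinarith
    have hfin : 3 ^ n * (((n + 2) ^ 3) ^ n * ((n + 2) ^ 3) ^ n) ≤ n ^ (13 * n) := by
      calc 3 ^ n * (((n + 2) ^ 3) ^ n * ((n + 2) ^ 3) ^ n)
          ≤ n ^ n * (((n ^ 2) ^ 3) ^ n * ((n ^ 2) ^ 3) ^ n) := by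
            gcongr
            omega
        _ = n ^ (13 * n) := by ring
    have : (n : ℝ) ^ (13 * (n : ℝ)) = ((n ^ (13 * n) : ℕ) : ℝ) := by
      push_cast
      rw [← Real.rpow_natCast]
      push_cast
      rfl
    rw [this]
    exact_mod_cast hu.trans hfin
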